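/- Under Assumptions 2–4 and GT-NSGDm, for all t = 0, …, T the stacked gradient estimation error satisfies E[‖v^t − ∇F(x^t)‖] ≤ β^{t+1} ‖∇F(1_n ⊗ x̄⁰)‖ + 2√2 (Σ_{k=0}^t β^{(t−k)p}(1−β)^p)^{1/p} n σ + n Σ_{k=0}^t β^{t−k+1} (2αλ/(1−λ) + α) L. -/

import Mathlib

open MeasureTheory

/-!
Unrolling the momentum recursion splits the stacked error into a weighted sum of the noises, a
weighted sum of the gradient increments and `-β ^ (t + 1) • ∇F (x 0)`.

On each node the noise is a martingale difference sequence, so the `p`-th moment of its weighted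
sum obeys the von Bahr–Esseen inequality: in
`‖a + b‖ ^ p ≤ ‖a‖ ^ p + p ⟪‖a‖ ^ (p - 2) • a, b⟫ + 2 ‖b‖ ^ p` the inner product averages out when
`b` has conditional mean zero. Jensen's inequality then bounds the first moment.

The gradient increments are at most `L` times the displacement of the stacked iterate. Mixing
contracts the deviation from the average by `λ` and every step has norm at most `√n α`, so the
deviation stays below `λ / (1 - λ) * √n α`, while the average itself moves by at most `√n α`.
-/

section PowerInequality

lemma rpow_le_tangent {m u q : ℝ} (hm : 0 < m) (hu : 0 ≤ u) (hq0 : 0 ≤ q) (hq1 : q ≤ 1) :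
    u ^ q ≤ m ^ q + q * m ^ (q - 1) * (u - m) := by
  have bernoulli : (u / m) ^ q ≤ 1 + q * (u / m - 1) := by
    simpa using rpow_one_add_le_one_add_mul_self (s := u / m - 1)
      (by linarith [div_nonneg hu hm.le]) hq0 hq1
  rw [Real.div_rpow hu hm.le, div_le_iff₀ (Real.rpow_pos_of_pos hm q)] at bernoulli
  refine bernoulli.trans_eq ?_
  rw [Real.rpow_sub_one hm.ne']
  field_simp

lemma rpow_le_tangent_sq {m u p : ℝ} (hm : 0 < m) (hu : 0 ≤ u) (hp0 : 0 ≤ p) (hp2 : p ≤ 2) :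
    u ^ p ≤ m ^ p + p / 2 * m ^ (p - 2) * (u ^ 2 - m ^ 2) := by
  have sq_rpow {z : ℝ} (hz : 0 ≤ z) (q : ℝ) : (z ^ 2) ^ q = z ^ (2 * q) := by
    rw [← Real.rpow_natCast_mul hz]; norm_num
  have h := rpow_le_tangent (q := p / 2) (sq_pos_of_pos hm) (sq_nonneg u)
    (by linarith) (by linarith)
  rwa [sq_rpow hu, sq_rpow hm.le, sq_rpow hm.le, mul_sub_one, mul_div_cancel₀ p two_ne_zero] at h

lemma rpow_sub_two_mul_sq {r : ℝ} (hr : 0 < r) (p : ℝ) : r ^ (p - 2) * r ^ 2 = r ^ p := by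
  rw [← Real.rpow_add_natCast hr.ne']; norm_num

lemma rpow_sub_two_mul_self {r : ℝ} (hr : 0 < r) (p : ℝ) : r ^ (p - 2) * r = r ^ (p - 1) := by
  rw [← Real.rpow_add_one hr.ne']; ring_nf

lemma rpow_sub_one_mul_sub_le {r s p : ℝ} (hr : 0 ≤ r) (hs : 0 < s) (hp1 : 1 ≤ p) (hp2 : p ≤ 2) :
    p * (r ^ (p - 1) * s - s ^ (p - 1) * r) ≤ s ^ p := by
  have tangent : r ^ (p - 1) ≤ s ^ (p - 1) + (p - 1) * s ^ (p - 2) * (r - s) := by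
    simpa only [sub_sub, one_add_one_eq_two] using
      rpow_le_tangent (q := p - 1) hs hr (by linarith) (by linarith)
  have hS : 0 < s ^ (p - 2) := by positivity
  rw [← rpow_sub_two_mul_self hs] at tangent ⊢
  rw [← rpow_sub_two_mul_sq hs p]
  generalize s ^ (p - 2) = S at *
  calc p * (r ^ (p - 1) * s - S * s * r)
      ≤ p * ((S * s + (p - 1) * S * (r - s)) * s - S * s * r) := by gcongr
    _ = p * (2 - p) * (S * s ^ 2) - p * (2 - p) * (S * s * r) := by ring
    _ ≤ 1 * (S * s ^ 2) - 0 := by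
        gcongr
        · nlinarith [sq_nonneg (p - 1)]
        · have : 0 ≤ 2 - p := by linarith
          positivity
    _ = S * s ^ 2 := by ring

variable {E : Type*} [NormedAddCommGroup E] [InnerProductSpace ℝ E] {a b : E} {p : ℝ}

lemma norm_add_rpow_le_of_norm_le (ha : a ≠ 0) (hba : ‖b‖ ≤ ‖a‖) (hp0 : 0 ≤ p) (hp2 : p ≤ 2) :
    ‖a + b‖ ^ p ≤ ‖a‖ ^ p + p * (‖a‖ ^ (p - 2) * inner ℝ a b) + ‖b‖ ^ p := by
  rcases eq_or_ne b 0 with rfl | hb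
  · simpa using Real.rpow_nonneg le_rfl p
  have hr : 0 < ‖a‖ := norm_pos_iff.2 ha
  have hs : 0 < ‖b‖ := norm_pos_iff.2 hb
  have remainder : p / 2 * (‖a‖ ^ (p - 2) * ‖b‖ ^ 2) ≤ 1 * ‖b‖ ^ p := by
    rw [← rpow_sub_two_mul_sq hs]
    gcongr ?_ * (?_ * _)
    · linarith
    · exact Real.rpow_le_rpow_of_nonpos hs hba (by linarith)
  have tangent := rpow_le_tangent_sq hr (norm_nonneg (a + b)) hp0 hp2
  rw [norm_add_sq_real] at tangent
  linarith

lemma norm_add_rpow_le_of_le_norm (ha : a ≠ 0) (hab : ‖a‖ ≤ ‖b‖) (hp1 : 1 ≤ p) (hp2 : p ≤ 2) :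
    ‖a + b‖ ^ p ≤ ‖a‖ ^ p + p * (‖a‖ ^ (p - 2) * inner ℝ a b) + 2 * ‖b‖ ^ p := by
  -- The tangent at `‖b‖` gives the inner product the weight `‖b‖ ^ (p - 2)`; `cross` is the price
  -- of replacing it by `‖a‖ ^ (p - 2)`.
  have hr : 0 < ‖a‖ := norm_pos_iff.2 ha
  have hs : 0 < ‖b‖ := hr.trans_le hab
  have hRS : ‖b‖ ^ (p - 2) ≤ ‖a‖ ^ (p - 2) :=
    Real.rpow_le_rpow_of_nonpos hr hab (by linarith)
  have remainder : p / 2 * (‖b‖ ^ (p - 2) * ‖a‖ ^ 2) ≤ 1 * ‖a‖ ^ p := by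
    rw [← rpow_sub_two_mul_sq hr]
    gcongr ?_ * (?_ * _)
    linarith
  have cross : p * ((‖a‖ ^ (p - 2) - ‖b‖ ^ (p - 2)) * -inner ℝ a b) ≤ ‖b‖ ^ p :=
    calc p * ((‖a‖ ^ (p - 2) - ‖b‖ ^ (p - 2)) * -inner ℝ a b)
        ≤ p * ((‖a‖ ^ (p - 2) - ‖b‖ ^ (p - 2)) * (‖a‖ * ‖b‖)) := by
          gcongr
          exact (neg_le_abs _).trans (abs_real_inner_le_norm a b)
      _ = p * (‖a‖ ^ (p - 1) * ‖b‖ - ‖b‖ ^ (p - 1) * ‖a‖) := by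
          rw [← rpow_sub_two_mul_self hr, ← rpow_sub_two_mul_self hs]; ring
      _ ≤ ‖b‖ ^ p := rpow_sub_one_mul_sub_le hr.le hs hp1 hp2
  have tangent := rpow_le_tangent_sq hs (norm_nonneg (a + b)) (by linarith) hp2
  rw [norm_add_sq_real] at tangent
  linarith

lemma norm_add_rpow_le (a b : E) (hp1 : 1 ≤ p) (hp2 : p ≤ 2) :
    ‖a + b‖ ^ p ≤ ‖a‖ ^ p + p * inner ℝ (‖a‖ ^ (p - 2) • a) b + 2 * ‖b‖ ^ p := by
  have hb : 0 ≤ ‖b‖ ^ p := by positivity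
  rw [real_inner_smul_left]
  rcases eq_or_ne a 0 with rfl | ha
  · simp only [zero_add, norm_zero, Real.zero_rpow (show p ≠ 0 by linarith), inner_zero_left,
      mul_zero]
    linarith
  rcases le_total ‖b‖ ‖a‖ with hba | hab
  · linarith [norm_add_rpow_le_of_norm_le ha hba (by linarith) hp2]
  · exact norm_add_rpow_le_of_le_norm ha hab hp1 hp2

lemma abs_inner_rpow_smul_le (a b : E) (hp1 : 1 ≤ p) :
    |inner ℝ (‖a‖ ^ (p - 2) • a) b| ≤ ‖a‖ ^ p + ‖b‖ ^ p := by
  rcases eq_or_ne a 0 with rfl | ha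
  · simp only [smul_zero, inner_zero_left, abs_zero]
    positivity
  have rpow_sub_one_mul {r : ℝ} (hr : 0 ≤ r) : r ^ (p - 1) * r = r ^ p := by
    rw [← Real.rpow_add_one' hr (by linarith), sub_add_cancel]
  have hM : 0 ≤ max ‖a‖ ‖b‖ := le_max_of_le_left (norm_nonneg a)
  calc |inner ℝ (‖a‖ ^ (p - 2) • a) b|
      ≤ ‖‖a‖ ^ (p - 2) • a‖ * ‖b‖ := abs_real_inner_le_norm _ _
    _ = ‖a‖ ^ (p - 1) * ‖b‖ := by
        rw [norm_smul, Real.norm_of_nonneg (by positivity),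
          rpow_sub_two_mul_self (norm_pos_iff.2 ha)]
    _ ≤ max ‖a‖ ‖b‖ ^ (p - 1) * max ‖a‖ ‖b‖ := by
        gcongr
        · exact le_max_left _ _
        · exact le_max_right _ _
    _ = max (‖a‖ ^ p) (‖b‖ ^ p) := by
        rw [rpow_sub_one_mul hM, (Real.monotoneOn_rpow_Ici_of_exponent_nonneg (by linarith)).map_max
          (norm_nonneg a) (norm_nonneg b)]
    _ ≤ ‖a‖ ^ p + ‖b‖ ^ p := max_le_add_of_nonneg (by positivity) (by positivity)

end PowerInequality

section Moments

variable {E Ω : Type*} [NormedAddCommGroup E] {m mΩ : MeasurableSpace Ω} {μ : Measure Ω} {p : ℝ}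

lemma integrable_norm_rpow_iff_memLp_ofReal {f : Ω → E} (hp : 0 < p)
    (hf : AEStronglyMeasurable f μ) :
    Integrable (fun ω => ‖f ω‖ ^ p) μ ↔ MemLp f (ENNReal.ofReal p) μ := by
  rw [← integrable_norm_rpow_iff hf (ENNReal.ofReal_pos.2 hp).ne' ENNReal.ofReal_ne_top,
    ENNReal.toReal_ofReal hp.le]

lemma integrable_norm_finsetSum_rpow {ι : Type*} {f : ι → Ω → E} (hp : 0 < p)
    (hf : ∀ k, AEStronglyMeasurable (f k) μ) (hfp : ∀ k, Integrable (fun ω => ‖f k ω‖ ^ p) μ)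
    (S : Finset ι) : Integrable (fun ω => ‖∑ k ∈ S, f k ω‖ ^ p) μ := by
  rw [integrable_norm_rpow_iff_memLp_ofReal hp
    (Finset.aestronglyMeasurable_fun_sum S fun k _ => hf k)]
  exact memLp_finsetSum S fun k _ => (integrable_norm_rpow_iff_memLp_ofReal hp (hf k)).1 (hfp k)

lemma integral_norm_le_rpow_integral_norm_rpow [IsProbabilityMeasure μ] {f : Ω → E} (hp1 : 1 ≤ p)
    (hf : Integrable f μ) (hfp : Integrable (fun ω => ‖f ω‖ ^ p) μ) :
    ∫ ω, ‖f ω‖ ∂μ ≤ (∫ ω, ‖f ω‖ ^ p ∂μ) ^ (1 / p) := by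
  have jensen : (∫ ω, ‖f ω‖ ∂μ) ^ p ≤ ∫ ω, ‖f ω‖ ^ p ∂μ :=
    (convexOn_rpow hp1).map_integral_le
      (Real.continuous_rpow_const (by linarith)).continuousOn isClosed_Ici
      (ae_of_all _ fun _ => norm_nonneg _) hf.norm hfp
  rw [one_div]
  exact (Real.le_rpow_inv_iff_of_pos (integral_nonneg fun _ => norm_nonneg _)
    (integral_nonneg fun _ => by positivity) (by linarith)).2 jensen

lemma integral_le_of_condExp_le [IsProbabilityMeasure μ] (hm : m ≤ mΩ) {f : Ω → ℝ} {C : ℝ}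
    (hf : ∀ᵐ ω ∂μ, (μ[f | m]) ω ≤ C) : ∫ ω, f ω ∂μ ≤ C := by
  rw [← integral_condExp hm]
  simpa using integral_mono_ae integrable_condExp (integrable_const C) hf

lemma integral_le_sum_integral_add_const [IsProbabilityMeasure μ] {ι : Type*} [Fintype ι]
    {F : Ω → ℝ} {N : ι → Ω → ℝ} {C : ℝ} (hF : ∀ ω, 0 ≤ F ω) (hN : ∀ i, Integrable (N i) μ)
    (hFN : ∀ ω, F ω ≤ ∑ i, N i ω + C) : ∫ ω, F ω ∂μ ≤ ∑ i, ∫ ω, N i ω ∂μ + C := by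
  have hsum : Integrable (fun ω => ∑ i, N i ω) μ := integrable_finsetSum _ fun i _ => hN i
  calc ∫ ω, F ω ∂μ
      ≤ ∫ ω, ∑ i, N i ω + C ∂μ :=
        integral_mono_of_nonneg (ae_of_all _ hF) (hsum.add (integrable_const C)) (ae_of_all _ hFN)
    _ = ∑ i, ∫ ω, N i ω ∂μ + C := by
        rw [integral_add hsum (integrable_const C), integral_finsetSum _ fun i _ => hN i,
          integral_const, probReal_univ, one_smul]

variable [NormedSpace ℝ E] [CompleteSpace E]

lemma condExp_sub_eq_zero_of_condExp_eq {g h : Ω → E} (hm : m ≤ mΩ) [SigmaFinite (μ.trim hm)]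
    (hg : Integrable g μ) (hgh : μ[g | m] =ᵐ[μ] h) : μ[fun ω => g ω - h ω | m] =ᵐ[μ] 0 := by
  have hh : Integrable h μ := integrable_condExp.congr hgh
  have hhm : AEStronglyMeasurable[m] h μ :=
    stronglyMeasurable_condExp.aestronglyMeasurable.congr hgh
  filter_upwards [condExp_sub hg hh m, condExp_of_aestronglyMeasurable' hm hhm hh, hgh]
    with ω hsub hself hω
  exact hsub.trans (by rw [Pi.sub_apply, hω, hself, sub_self, Pi.zero_apply])

end Moments

section VonBahrEsseen

variable {E Ω : Type*} [NormedAddCommGroup E] [InnerProductSpace ℝ E]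
  {m mΩ : MeasurableSpace Ω} {μ : Measure Ω} {A B : Ω → E} {p : ℝ}

lemma aestronglyMeasurable_norm_rpow_smul (hA : AEStronglyMeasurable[m] A μ) (q : ℝ) :
    AEStronglyMeasurable[m] (fun ω => ‖A ω‖ ^ q • A ω) μ := by
  obtain ⟨A', hA', hAA'⟩ := hA
  refine ⟨fun ω => ‖A' ω‖ ^ q • A' ω,
    (hA'.norm.measurable.pow_const q).stronglyMeasurable.smul hA', ?_⟩
  filter_upwards [hAA'] with ω hω
  rw [hω]

lemma integrable_inner_norm_rpow_smul (hp1 : 1 ≤ p)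
    (hA : AEStronglyMeasurable A μ) (hAp : Integrable (fun ω => ‖A ω‖ ^ p) μ)
    (hB : AEStronglyMeasurable B μ) (hBp : Integrable (fun ω => ‖B ω‖ ^ p) μ) :
    Integrable (fun ω => inner ℝ (‖A ω‖ ^ (p - 2) • A ω) (B ω)) μ :=
  (hAp.add hBp).mono' ((aestronglyMeasurable_norm_rpow_smul hA _).inner hB)
    (ae_of_all _ fun _ => abs_inner_rpow_smul_le _ _ hp1)

variable [CompleteSpace E]

lemma integral_inner_eq_zero_of_condExp_eq_zero (hm : m ≤ mΩ) [SigmaFinite (μ.trim hm)]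
    (hA : AEStronglyMeasurable[m] A μ) (hB : Integrable B μ)
    (hAB : Integrable (fun ω => inner ℝ (A ω) (B ω)) μ) (hB0 : μ[B | m] =ᵐ[μ] 0) :
    ∫ ω, inner ℝ (A ω) (B ω) ∂μ = 0 := by
  rw [← integral_condExp hm]
  refine integral_eq_zero_of_ae ?_
  filter_upwards [condExp_bilin_of_aestronglyMeasurable_left (innerSL ℝ) hA hAB hB, hB0]
    with ω hpull hω
  exact hpull.trans (by simp [hω])

lemma integral_norm_add_rpow_le (hm : m ≤ mΩ) [SigmaFinite (μ.trim hm)]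
    (hp1 : 1 ≤ p) (hp2 : p ≤ 2)
    (hA : AEStronglyMeasurable[m] A μ) (hAp : Integrable (fun ω => ‖A ω‖ ^ p) μ)
    (hB : Integrable B μ) (hBp : Integrable (fun ω => ‖B ω‖ ^ p) μ) (hB0 : μ[B | m] =ᵐ[μ] 0) :
    ∫ ω, ‖A ω + B ω‖ ^ p ∂μ ≤ ∫ ω, ‖A ω‖ ^ p ∂μ + 2 * ∫ ω, ‖B ω‖ ^ p ∂μ := by
  have hAB := integrable_inner_norm_rpow_smul hp1 (hA.mono hm) hAp hB.1 hBp
  have cross : ∫ ω, inner ℝ (‖A ω‖ ^ (p - 2) • A ω) (B ω) ∂μ = 0 :=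
    integral_inner_eq_zero_of_condExp_eq_zero hm (aestronglyMeasurable_norm_rpow_smul hA _)
      hB hAB hB0
  have hfirst : Integrable
      (fun ω => ‖A ω‖ ^ p + p * inner ℝ (‖A ω‖ ^ (p - 2) • A ω) (B ω)) μ :=
    hAp.add (hAB.const_mul p)
  calc ∫ ω, ‖A ω + B ω‖ ^ p ∂μ
      ≤ ∫ ω, (‖A ω‖ ^ p + p * inner ℝ (‖A ω‖ ^ (p - 2) • A ω) (B ω)) + 2 * ‖B ω‖ ^ p ∂μ :=
        integral_mono_of_nonneg (ae_of_all _ fun _ => by positivity)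
          (hfirst.add (hBp.const_mul 2)) (ae_of_all _ fun _ => norm_add_rpow_le _ _ hp1 hp2)
    _ = ∫ ω, ‖A ω‖ ^ p ∂μ + 2 * ∫ ω, ‖B ω‖ ^ p ∂μ := by
        rw [integral_add hfirst (hBp.const_mul 2), integral_add hAp (hAB.const_mul p),
          integral_const_mul, integral_const_mul, cross, mul_zero, add_zero]

variable {𝓕 : Filtration ℕ mΩ} {s : ℕ → Ω → E}

theorem von_bahr_esseen [SigmaFiniteFiltration μ 𝓕] (hp1 : 1 ≤ p) (hp2 : p ≤ 2)
    (hs : ∀ k, AEStronglyMeasurable[𝓕 (k + 1)] (s k) μ) (hsi : ∀ k, Integrable (s k) μ)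
    (hsp : ∀ k, Integrable (fun ω => ‖s k ω‖ ^ p) μ) (hs0 : ∀ k, μ[s k | 𝓕 k] =ᵐ[μ] 0)
    (N : ℕ) :
    ∫ ω, ‖∑ k ∈ Finset.range N, s k ω‖ ^ p ∂μ
      ≤ 2 * ∑ k ∈ Finset.range N, ∫ ω, ‖s k ω‖ ^ p ∂μ := by
  induction N with
  | zero => simp [Real.zero_rpow (show p ≠ 0 by linarith)]
  | succ N ih =>
    simp only [Finset.sum_range_succ]
    have hpartial : AEStronglyMeasurable[𝓕 N] (fun ω => ∑ k ∈ Finset.range N, s k ω) μ := by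
      choose s' hs' hss' using hs
      refine ⟨fun ω => ∑ k ∈ Finset.range N, s' k ω, Finset.stronglyMeasurable_fun_sum _
        fun k hk => (hs' k).mono (𝓕.mono (Finset.mem_range.1 hk)), ?_⟩
      filter_upwards [ae_all_iff.2 hss'] with ω hω
      simp only [hω]
    have step := integral_norm_add_rpow_le (𝓕.le N) hp1 hp2 hpartial
      (integrable_norm_finsetSum_rpow (by linarith) (fun k => (hsi k).1) hsp _)
      (hsi N) (hsp N) (hs0 N)
    linarith

lemma integral_norm_weighted_sum_le [IsProbabilityMeasure μ] {c : ℕ → ℝ} {σ : ℝ}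
    (hp1 : 1 ≤ p) (hp2 : p ≤ 2) (hσ : 0 ≤ σ) (hc : ∀ k, 0 ≤ c k)
    (hs : ∀ k, AEStronglyMeasurable[𝓕 (k + 1)] (s k) μ) (hsi : ∀ k, Integrable (s k) μ)
    (hsp : ∀ k, Integrable (fun ω => ‖s k ω‖ ^ p) μ) (hs0 : ∀ k, μ[s k | 𝓕 k] =ᵐ[μ] 0)
    (hmoment : ∀ k, ∫ ω, ‖s k ω‖ ^ p ∂μ ≤ σ ^ p) (N : ℕ) :
    ∫ ω, ‖∑ k ∈ Finset.range N, c k • s k ω‖ ∂μ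
      ≤ 2 ^ (1 / p) * (∑ k ∈ Finset.range N, c k ^ p) ^ (1 / p) * σ := by
  have norm_rpow (k : ℕ) (ω : Ω) : ‖c k • s k ω‖ ^ p = c k ^ p * ‖s k ω‖ ^ p := by
    rw [norm_smul, Real.norm_of_nonneg (hc k), Real.mul_rpow (hc k) (norm_nonneg _)]
  have hcsi (k : ℕ) : Integrable (fun ω => c k • s k ω) μ := (hsi k).smul (c k)
  have hcsp (k : ℕ) : Integrable (fun ω => ‖c k • s k ω‖ ^ p) μ := by
    simpa only [norm_rpow] using (hsp k).const_mul (c k ^ p)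
  have hcs0 (k : ℕ) : μ[fun ω => c k • s k ω | 𝓕 k] =ᵐ[μ] 0 := by
    filter_upwards [condExp_smul (c k) (s k) (𝓕 k), hs0 k] with ω hsmul hω
    exact hsmul.trans (by simp [hω])
  have hpth : ∫ ω, ‖∑ k ∈ Finset.range N, c k • s k ω‖ ^ p ∂μ
      ≤ 2 * (∑ k ∈ Finset.range N, c k ^ p) * σ ^ p := by
    refine (von_bahr_esseen hp1 hp2 (s := fun k ω => c k • s k ω)
      (fun k => (hs k).const_smul (c k)) hcsi hcsp hcs0 N).trans ?_
    simp only [norm_rpow, integral_const_mul, mul_assoc, Finset.sum_mul]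
    gcongr with k
    · exact Real.rpow_nonneg (hc k) p
    · exact hmoment k
  have hsum : 0 ≤ ∑ k ∈ Finset.range N, c k ^ p :=
    Finset.sum_nonneg fun k _ => Real.rpow_nonneg (hc k) p
  calc ∫ ω, ‖∑ k ∈ Finset.range N, c k • s k ω‖ ∂μ
      ≤ (∫ ω, ‖∑ k ∈ Finset.range N, c k • s k ω‖ ^ p ∂μ) ^ (1 / p) :=
        integral_norm_le_rpow_integral_norm_rpow hp1 (integrable_finsetSum _ fun k _ => hcsi k)
          (integrable_norm_finsetSum_rpow (by linarith) (fun k => (hcsi k).1) hcsp _)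
    _ ≤ (2 * (∑ k ∈ Finset.range N, c k ^ p) * σ ^ p) ^ (1 / p) :=
        Real.rpow_le_rpow (integral_nonneg fun _ => by positivity) hpth (by positivity)
    _ = 2 ^ (1 / p) * (∑ k ∈ Finset.range N, c k ^ p) ^ (1 / p) * σ := by
        rw [Real.mul_rpow (by positivity) (by positivity), Real.mul_rpow two_pos.le hsum,
          one_div, Real.rpow_rpow_inv hσ (by linarith)]

end VonBahrEsseen

section Momentum

lemma sum_pow_succ_sub_smul {V : Type*} [AddCommGroup V] [Module ℝ V] {N t : ℕ} (hN : N ≤ t + 1)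
    (β : ℝ) (w : ℕ → V) :
    ∑ k ∈ Finset.range N, β ^ (t + 1 - k) • w k = β • ∑ k ∈ Finset.range N, β ^ (t - k) • w k := by
  rw [Finset.smul_sum]
  refine Finset.sum_congr rfl fun k hk => ?_
  rw [Nat.succ_sub (by grind), pow_succ', mul_smul]

lemma momentum_sub_eq {V : Type*} [AddCommGroup V] [Module ℝ V] {β : ℝ} {v g : ℕ → V}
    (hv0 : v 0 = (1 - β) • g 0) (hv : ∀ t, v (t + 1) = β • v t + (1 - β) • g (t + 1))
    (h : ℕ → V) (t : ℕ) :
    v t - h t = ∑ k ∈ Finset.range (t + 1), β ^ (t - k) • (1 - β) • (g k - h k)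
      + ∑ k ∈ Finset.range t, β ^ (t - k) • (h k - h (k + 1)) - β ^ (t + 1) • h 0 := by
  induction t with
  | zero =>
    rw [zero_add, Finset.sum_range_one, Finset.sum_range_zero, Nat.sub_self, hv0]
    module
  | succ t ih =>
    rw [Finset.sum_range_succ _ (t + 1),
      Finset.sum_range_succ (fun k => β ^ (t + 1 - k) • (h k - h (k + 1))) t,
      sum_pow_succ_sub_smul le_rfl, sum_pow_succ_sub_smul t.le_succ, hv, eq_add_of_sub_eq ih,
      Nat.sub_self, Nat.add_sub_cancel_left, pow_succ β (t + 1)]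
    module

lemma sum_range_pow_sub_le {β : ℝ} (hβ : 0 ≤ β) (t : ℕ) :
    ∑ k ∈ Finset.range t, β ^ (t - k) ≤ ∑ k ∈ Finset.range (t + 1), β ^ (t - k + 1) := by
  rw [Finset.sum_range_succ']
  refine le_add_of_le_of_nonneg (Finset.sum_le_sum fun k hk => ?_) (by positivity)
  rw [show t - (k + 1) + 1 = t - k by grind]

lemma norm_momentum_sub_le {V : Type*} [NormedAddCommGroup V] [NormedSpace ℝ V] {β K : ℝ}
    {v g h : ℕ → V} (hβ : 0 ≤ β)
    (hv0 : v 0 = (1 - β) • g 0) (hv : ∀ t, v (t + 1) = β • v t + (1 - β) • g (t + 1))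
    (hK : ∀ t, ‖h t - h (t + 1)‖ ≤ K) (t : ℕ) :
    ‖v t - h t‖ ≤ ‖∑ k ∈ Finset.range (t + 1), (β ^ (t - k) * (1 - β)) • (g k - h k)‖
      + (β ^ (t + 1) * ‖h 0‖ + (∑ k ∈ Finset.range (t + 1), β ^ (t - k + 1)) * K) := by
  have drift : ‖∑ k ∈ Finset.range t, β ^ (t - k) • (h k - h (k + 1))‖
      ≤ (∑ k ∈ Finset.range (t + 1), β ^ (t - k + 1)) * K :=
    calc ‖∑ k ∈ Finset.range t, β ^ (t - k) • (h k - h (k + 1))‖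
        ≤ ∑ k ∈ Finset.range t, β ^ (t - k) * K := norm_sum_le_of_le _ fun k _ => by
          rw [norm_smul, Real.norm_of_nonneg (by positivity)]
          gcongr
          exact hK k
      _ ≤ (∑ k ∈ Finset.range (t + 1), β ^ (t - k + 1)) * K := by
          rw [← Finset.sum_mul]
          gcongr
          · exact (norm_nonneg _).trans (hK 0)
          · exact sum_range_pow_sub_le hβ t
  have initial : ‖β ^ (t + 1) • h 0‖ = β ^ (t + 1) * ‖h 0‖ := by
    rw [norm_smul, Real.norm_of_nonneg (by positivity)]
  simp only [momentum_sub_eq hv0 hv h t, mul_smul]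
  grw [norm_sub_le, norm_add_le, drift, initial]
  exact (by ring : _ = _).le

end Momentum

section StackedNorm

variable {ι E F : Type*} [Fintype ι] [NormedAddCommGroup E] [NormedAddCommGroup F]

lemma norm_toLp_two_le_sum (u : ι → E) : ‖WithLp.toLp 2 u‖ ≤ ∑ i, ‖u i‖ := by
  rw [PiLp.norm_eq_of_L2]
  exact Real.sqrt_le_iff.2 ⟨by positivity,
    Finset.sum_sq_le_sq_sum_of_nonneg fun i _ => norm_nonneg (u i)⟩

lemma norm_toLp_two_le_mul {c : ℝ} (hc : 0 ≤ c) {u : ι → E} {w : ι → F}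
    (h : ∀ i, ‖u i‖ ≤ c * ‖w i‖) : ‖WithLp.toLp 2 u‖ ≤ c * ‖WithLp.toLp 2 w‖ := by
  refine le_of_sq_le_sq ?_ (by positivity)
  rw [mul_pow, PiLp.norm_sq_eq_of_L2, PiLp.norm_sq_eq_of_L2, Finset.mul_sum]
  gcongr with i
  rw [← mul_pow]
  gcongr
  exact h i

lemma norm_toLp_two_le_sqrt_card_mul {c : ℝ} (hc : 0 ≤ c) {u : ι → E} (h : ∀ i, ‖u i‖ ≤ c) :
    ‖WithLp.toLp 2 u‖ ≤ √(Fintype.card ι) * c := by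
  have h1 := norm_toLp_two_le_mul (w := fun _ : ι => (1 : ℝ)) hc (by simpa using h)
  simpa [PiLp.norm_eq_of_L2, mul_comm] using h1

end StackedNorm

section Mixing

-- `W • u` is the blockwise action of `W ⊗ I` on a stacked vector `u : ι → E`.
open scoped Matrix.Module

variable {ι E : Type*} [Fintype ι]

variable (ι) in
/-- The matrix `(1/n) 1ₙ 1ₙᵀ`, with `n = card ι`, which replaces every block of a stacked vector
by the average of the blocks. -/
noncomputable def averagingMatrix : Matrix ι ι ℝ :=
  (Fintype.card ι : ℝ)⁻¹ • Matrix.of fun _ _ => 1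

lemma averagingMatrix_mul {W : Matrix ι ι ℝ} (hW : ∀ r, ∑ i, W i r = 1) :
    averagingMatrix ι * W = averagingMatrix ι := by
  ext i r
  simp [averagingMatrix, Matrix.mul_apply, ← Finset.mul_sum, hW]

lemma mul_averagingMatrix {W : Matrix ι ι ℝ} (hW : ∀ i, ∑ r, W i r = 1) :
    W * averagingMatrix ι = averagingMatrix ι := by
  ext i r
  simp [averagingMatrix, Matrix.mul_apply, ← Finset.sum_mul, hW]

lemma sum_averagingMatrix (i : ι) : ∑ r, averagingMatrix ι i r = 1 := by
  have : Nonempty ι := ⟨i⟩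
  simp [averagingMatrix]

lemma isStarProjection_averagingMatrix : IsStarProjection (averagingMatrix ι) where
  isIdempotentElem := mul_averagingMatrix sum_averagingMatrix
  isSelfAdjoint := by ext i r; simp [averagingMatrix]

variable [DecidableEq ι]

/-- The deviation of a stacked vector from its block average. Its norm is the consensus error of
the network. -/
noncomputable def disagreement [AddCommGroup E] [Module ℝ E] (u : ι → E) : ι → E :=
  u - averagingMatrix ι • u

lemma disagreement_const [AddCommGroup E] [Module ℝ E] (z : E) :
    disagreement (fun _ : ι => z) = 0 := by
  ext i
  simp [disagreement, ← Finset.sum_smul, sum_averagingMatrix]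

lemma disagreement_mix [AddCommGroup E] [Module ℝ E] {W : Matrix ι ι ℝ}
    (hrow : ∀ i, ∑ r, W i r = 1) (hcol : ∀ r, ∑ i, W i r = 1) (u s : ι → E) :
    disagreement (W • (u - s)) = (W - averagingMatrix ι) • (disagreement u - s) := by
  have hkill : (W - averagingMatrix ι) * averagingMatrix ι = 0 := by
    rw [sub_mul, mul_averagingMatrix hrow, mul_averagingMatrix sum_averagingMatrix, sub_self]
  simp only [disagreement, smul_sub, ← mul_smul, hkill, zero_smul, averagingMatrix_mul hcol,
    sub_smul]
  abel

variable [NormedAddCommGroup E] [InnerProductSpace ℝ E]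

lemma sum_inner_matrix_smul_sq_le (A : Matrix ι ι ℝ) (u : ι → E) (e : E) :
    ∑ i, ‖inner ℝ e ((A • u) i)‖ ^ 2
      ≤ ‖Matrix.toEuclideanCLM (𝕜 := ℝ) A‖ ^ 2 * ∑ i, ‖inner ℝ e (u i)‖ ^ 2 := by
  have h := (Matrix.toEuclideanCLM (𝕜 := ℝ) A).le_opNorm (WithLp.toLp 2 fun i => inner ℝ e (u i))
  have h2 := pow_le_pow_left₀ (norm_nonneg _) h 2
  rw [mul_pow, EuclideanSpace.norm_sq_eq, EuclideanSpace.norm_sq_eq] at h2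
  simpa [Matrix.mulVec, dotProduct, inner_sum, inner_smul_right] using h2

lemma norm_matrix_smul_le_of_finiteDimensional [FiniteDimensional ℝ E] (A : Matrix ι ι ℝ)
    (u : ι → E) :
    ‖WithLp.toLp 2 (A • u)‖ ≤ ‖Matrix.toEuclideanCLM (𝕜 := ℝ) A‖ * ‖WithLp.toLp 2 u‖ := by
  let b := stdOrthonormalBasis ℝ E
  refine le_of_sq_le_sq ?_ (by positivity)
  rw [mul_pow, PiLp.norm_sq_eq_of_L2, PiLp.norm_sq_eq_of_L2]
  simp only [← b.sum_sq_norm_inner_right]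
  rw [Finset.sum_comm, Finset.sum_comm (f := fun i j => ‖inner ℝ (b j) (u i)‖ ^ 2),
    Finset.mul_sum]
  exact Finset.sum_le_sum fun j _ => sum_inner_matrix_smul_sq_le A u (b j)

lemma norm_matrix_smul_le (A : Matrix ι ι ℝ) (u : ι → E) :
    ‖WithLp.toLp 2 (A • u)‖ ≤ ‖Matrix.toEuclideanCLM (𝕜 := ℝ) A‖ * ‖WithLp.toLp 2 u‖ := by
  let S := Submodule.span ℝ (Set.range u)
  have : FiniteDimensional ℝ S := FiniteDimensional.span_of_finite ℝ (Set.finite_range u)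
  let w : ι → S := fun i => ⟨u i, Submodule.subset_span ⟨i, rfl⟩⟩
  have h := norm_matrix_smul_le_of_finiteDimensional A w
  simpa [PiLp.norm_eq_of_L2, w] using h

lemma norm_averagingMatrix_le_one : ‖Matrix.toEuclideanCLM (𝕜 := ℝ) (averagingMatrix ι)‖ ≤ 1 :=
  (isStarProjection_averagingMatrix.map (Matrix.toEuclideanCLM (𝕜 := ℝ) (n := ι))).norm_le

variable {W : Matrix ι ι ℝ} {lam B : ℝ}
  {x s : ℕ → ι → E}

lemma norm_disagreement_le (hrow : ∀ i, ∑ r, W i r = 1) (hcol : ∀ r, ∑ i, W i r = 1)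
    (hlam : ‖Matrix.toEuclideanCLM (𝕜 := ℝ) (W - averagingMatrix ι)‖ ≤ lam) (hlam1 : lam < 1)
    (hx0 : disagreement (x 0) = 0) (hx : ∀ t, x (t + 1) = W • (x t - s t))
    (hs : ∀ t, ‖WithLp.toLp 2 (s t)‖ ≤ B) (t : ℕ) :
    ‖WithLp.toLp 2 (disagreement (x t))‖ ≤ lam / (1 - lam) * B := by
  have hlam0 : 0 ≤ lam := (norm_nonneg _).trans hlam
  have hgap : 0 < 1 - lam := sub_pos.2 hlam1
  induction t with
  | zero =>
    have hB : 0 ≤ B := (norm_nonneg _).trans (hs 0)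
    rw [hx0, WithLp.toLp_zero, norm_zero]
    positivity
  | succ t ih =>
    rw [hx, disagreement_mix hrow hcol]
    calc ‖WithLp.toLp 2 ((W - averagingMatrix ι) • (disagreement (x t) - s t))‖
        ≤ lam * ‖WithLp.toLp 2 (disagreement (x t) - s t)‖ := by
          grw [norm_matrix_smul_le, hlam]
      _ ≤ lam * (lam / (1 - lam) * B + B) := by
          grw [WithLp.toLp_sub, norm_sub_le, ih, hs t]
      _ = lam / (1 - lam) * B := by field_simp; ring

lemma norm_sub_succ_le (hrow : ∀ i, ∑ r, W i r = 1) (hcol : ∀ r, ∑ i, W i r = 1)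
    (hlam : ‖Matrix.toEuclideanCLM (𝕜 := ℝ) (W - averagingMatrix ι)‖ ≤ lam) (hlam1 : lam < 1)
    (hx0 : disagreement (x 0) = 0) (hx : ∀ t, x (t + 1) = W • (x t - s t))
    (hs : ∀ t, ‖WithLp.toLp 2 (s t)‖ ≤ B) (t : ℕ) :
    ‖WithLp.toLp 2 (x t - x (t + 1))‖ ≤ (2 * lam / (1 - lam) + 1) * B := by
  have hdis := norm_disagreement_le hrow hcol hlam hlam1 hx0 hx hs
  have average : averagingMatrix ι • x (t + 1) = averagingMatrix ι • (x t - s t) := by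
    rw [hx, ← mul_smul, averagingMatrix_mul hcol]
  have split : x t - x (t + 1)
      = disagreement (x t) - disagreement (x (t + 1)) + averagingMatrix ι • s t := by
    rw [disagreement, disagreement, average, smul_sub]
    abel
  rw [split, WithLp.toLp_add, WithLp.toLp_sub]
  grw [norm_add_le, norm_sub_le, hdis t, hdis (t + 1), norm_matrix_smul_le,
    norm_averagingMatrix_le_one, hs t]
  exact (by ring : _ = _).le

end Mixing

section Constants

lemma norm_normalized_step_le {E : Type*} [NormedAddCommGroup E] [NormedSpace ℝ E] {α : ℝ}
    (hα : 0 ≤ α) (y : E) : ‖(α / ‖y‖) • y‖ ≤ α := by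
  rw [norm_smul, Real.norm_of_nonneg (by positivity), div_mul_eq_mul_div, mul_div_assoc]
  exact mul_le_of_le_one_right hα (div_self_le_one _)

lemma two_rpow_one_div_le {p : ℝ} (hp : 1 ≤ p) : (2 : ℝ) ^ (1 / p) ≤ 2 * √2 := by
  calc (2 : ℝ) ^ (1 / p) ≤ 2 ^ (1 : ℝ) :=
        Real.rpow_le_rpow_of_exponent_le one_le_two (div_le_one_of_le₀ hp (by linarith))
    _ ≤ 2 * √2 := by
        rw [Real.rpow_one]
        exact le_mul_of_one_le_right two_pos.le (Real.one_le_sqrt.2 one_le_two)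

lemma sqrt_natCast_le_self (n : ℕ) : √(n : ℝ) ≤ n := by
  rw [Real.sqrt_le_self_iff]
  exact_mod_cast n.eq_zero_or_pos

end Constants

section StackedError

variable {ι E : Type*} [Fintype ι] [NormedAddCommGroup E] [InnerProductSpace ℝ E]

lemma sqrt_sum_norm_momentum_sub_le [DecidableEq ι] {W : Matrix ι ι ℝ} {L lam α β : ℝ}
    {G : ι → E → E} {z : E} {x v g s : ℕ → ι → E} (hL : 0 ≤ L)
    (hG : ∀ i z w, ‖G i z - G i w‖ ≤ L * ‖z - w‖)
    (hrow : ∀ i, ∑ r, W i r = 1) (hcol : ∀ r, ∑ i, W i r = 1)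
    (hlam : ‖Matrix.toEuclideanCLM (𝕜 := ℝ) (W - averagingMatrix ι)‖ ≤ lam) (hlam1 : lam < 1)
    (hα : 0 ≤ α) (hβ : 0 ≤ β) (hx0 : ∀ i, x 0 i = z) (hv0 : ∀ i, v 0 i = (1 - β) • g 0 i)
    (hv : ∀ t i, v (t + 1) i = β • v t i + (1 - β) • g (t + 1) i)
    (hx : ∀ t i, x (t + 1) i = ∑ r, W i r • (x t r - s t r)) (hs : ∀ t i, ‖s t i‖ ≤ α) (t : ℕ) :
    √(∑ i, ‖v t i - G i (x t i)‖ ^ 2) ≤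
      ∑ i, ‖∑ k ∈ Finset.range (t + 1), (β ^ (t - k) * (1 - β)) • (g k i - G i (x k i))‖ +
      (β ^ (t + 1) * √(∑ i, ‖G i z‖ ^ 2) + Fintype.card ι *
        (∑ k ∈ Finset.range (t + 1), β ^ (t - k + 1)) * ((2 * α * lam / (1 - lam) + α) * L)) := by
  have hlam0 : 0 ≤ lam := (norm_nonneg _).trans hlam
  have hgap : 0 < 1 - lam := sub_pos.2 hlam1
  let V (t : ℕ) : PiLp 2 fun _ : ι => E := WithLp.toLp 2 (v t)
  let S (t : ℕ) : PiLp 2 fun _ : ι => E := WithLp.toLp 2 (g t)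
  let H (t : ℕ) : PiLp 2 fun _ : ι => E := WithLp.toLp 2 fun i => G i (x t i)
  have displacement (t : ℕ) : ‖WithLp.toLp 2 (x t - x (t + 1))‖
      ≤ (2 * lam / (1 - lam) + 1) * (√(Fintype.card ι) * α) :=
    norm_sub_succ_le hrow hcol hlam hlam1
      (by rw [show x 0 = fun _ => z from funext hx0, disagreement_const])
      (fun t => funext (hx t)) (fun t => norm_toLp_two_le_sqrt_card_mul hα (hs t)) t
  have drift (t : ℕ) : ‖H t - H (t + 1)‖
      ≤ Fintype.card ι * ((2 * α * lam / (1 - lam) + α) * L) :=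
    calc ‖H t - H (t + 1)‖
        ≤ L * ‖WithLp.toLp 2 (x t - x (t + 1))‖ := norm_toLp_two_le_mul hL fun i => hG i _ _
      _ ≤ L * ((2 * lam / (1 - lam) + 1) * (Fintype.card ι * α)) := by
          grw [displacement t, sqrt_natCast_le_self]
      _ = Fintype.card ι * ((2 * α * lam / (1 - lam) + α) * L) := by ring
  have noise : ‖∑ k ∈ Finset.range (t + 1), (β ^ (t - k) * (1 - β)) • (S k - H k)‖
      ≤ ∑ i, ‖∑ k ∈ Finset.range (t + 1), (β ^ (t - k) * (1 - β)) • (g k i - G i (x k i))‖ := by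
    simpa [S, H] using norm_toLp_two_le_sum (WithLp.ofLp
      (∑ k ∈ Finset.range (t + 1), (β ^ (t - k) * (1 - β)) • (S k - H k)))
  have initial : ‖H 0‖ = √(∑ i, ‖G i z‖ ^ 2) := by
    simp only [PiLp.norm_eq_of_L2, H, hx0]
  have error : ‖V t - H t‖ = √(∑ i, ‖v t i - G i (x t i)‖ ^ 2) := PiLp.norm_eq_of_L2 _
  have bound := norm_momentum_sub_le (v := V) (g := S) (h := H) hβ
    (by ext i; simp [V, S, hv0]) (fun t => by ext i; simp [V, S, hv]) drift t
  rw [error, initial] at bound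
  linarith

end StackedError

section Noise

variable {E Ω : Type*} [NormedAddCommGroup E] [InnerProductSpace ℝ E] [CompleteSpace E]
  {mΩ : MeasurableSpace Ω} {μ : Measure Ω} [IsProbabilityMeasure μ] {𝓕 : Filtration ℕ mΩ}

lemma integral_norm_momentum_noise_le {p σ β : ℝ} {g h : ℕ → Ω → E}
    (hp1 : 1 ≤ p) (hp2 : p ≤ 2) (hσ : 0 ≤ σ) (hβ : β ∈ Set.Icc (0 : ℝ) 1)
    (hg : ∀ t, AEStronglyMeasurable[𝓕 (t + 1)] (g t) μ) (hgi : ∀ t, Integrable (g t) μ)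
    (hgh : ∀ t, μ[g t | 𝓕 t] =ᵐ[μ] h t)
    (hp : ∀ t, Integrable (fun ω => ‖g t ω - h t ω‖ ^ p) μ)
    (hmoment : ∀ t, ∫ ω, ‖g t ω - h t ω‖ ^ p ∂μ ≤ σ ^ p) (t : ℕ) :
    ∫ ω, ‖∑ k ∈ Finset.range (t + 1), (β ^ (t - k) * (1 - β)) • (g k ω - h k ω)‖ ∂μ ≤
      2 * √2 * (∑ k ∈ Finset.range (t + 1), (β ^ (t - k)) ^ p * (1 - β) ^ p) ^ (1 / p) * σ := by
  have hβ0 : 0 ≤ β := hβ.1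
  have hβ1 : 0 ≤ 1 - β := sub_nonneg.2 hβ.2
  have hh (k : ℕ) : AEStronglyMeasurable[𝓕 (k + 1)] (h k) μ :=
    (stronglyMeasurable_condExp.mono (𝓕.mono k.le_succ)).aestronglyMeasurable.congr (hgh k)
  have bound := integral_norm_weighted_sum_le (c := fun k => β ^ (t - k) * (1 - β)) hp1 hp2 hσ
    (fun k => by positivity) (fun k => (hg k).sub (hh k))
    (fun k => (hgi k).sub (integrable_condExp.congr (hgh k))) hp
    (fun k => condExp_sub_eq_zero_of_condExp_eq (𝓕.le k) (hgi k) (hgh k)) hmoment (t + 1)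
  simp only [Real.mul_rpow (pow_nonneg hβ0 _) hβ1] at bound
  grw [← two_rpow_one_div_le hp1]
  exact bound

end Noise

theorem stacked_gradient_estimation_error_general {ι E Ω : Type*} [Fintype ι] [DecidableEq ι]
    [NormedAddCommGroup E] [InnerProductSpace ℝ E] [CompleteSpace E]
    {mΩ : MeasurableSpace Ω} {μ : Measure Ω} [IsProbabilityMeasure μ] {𝓕 : Filtration ℕ mΩ}
    {W : Matrix ι ι ℝ} {L p σ lam α β : ℝ} {G : ι → E → E} {z : E} {x v g s : ℕ → ι → Ω → E}
    (hL : 0 ≤ L) (hG : ∀ i z w, ‖G i z - G i w‖ ≤ L * ‖z - w‖)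
    (hp1 : 1 ≤ p) (hp2 : p ≤ 2) (hσ : 0 ≤ σ)
    (hrow : ∀ i, ∑ r, W i r = 1) (hcol : ∀ r, ∑ i, W i r = 1)
    (hlam : ‖Matrix.toEuclideanCLM (𝕜 := ℝ) (W - averagingMatrix ι)‖ ≤ lam) (hlam1 : lam < 1)
    (hα : 0 ≤ α) (hβ : β ∈ Set.Icc (0 : ℝ) 1)
    (hx0 : ∀ i ω, x 0 i ω = z) (hv0 : ∀ i ω, v 0 i ω = (1 - β) • g 0 i ω)
    (hv : ∀ t i ω, v (t + 1) i ω = β • v t i ω + (1 - β) • g (t + 1) i ω)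
    (hx : ∀ t i ω, x (t + 1) i ω = ∑ r, W i r • (x t r ω - s t r ω))
    (hs : ∀ t i ω, ‖s t i ω‖ ≤ α)
    (hg : ∀ t i, AEStronglyMeasurable[𝓕 (t + 1)] (g t i) μ) (hgi : ∀ t i, Integrable (g t i) μ)
    (hunbiased : ∀ t i, μ[g t i | 𝓕 t] =ᵐ[μ] fun ω => G i (x t i ω))
    (hp : ∀ t i, Integrable (fun ω => ‖g t i ω - G i (x t i ω)‖ ^ p) μ)
    (hmoment : ∀ t i, ∫ ω, ‖g t i ω - G i (x t i ω)‖ ^ p ∂μ ≤ σ ^ p) (t : ℕ) :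
    ∫ ω, √(∑ i, ‖v t i ω - G i (x t i ω)‖ ^ 2) ∂μ ≤
      β ^ (t + 1) * √(∑ i, ‖G i z‖ ^ 2) +
      2 * √2 * (∑ k ∈ Finset.range (t + 1), (β ^ (t - k)) ^ p * (1 - β) ^ p) ^ (1 / p) *
        Fintype.card ι * σ +
      Fintype.card ι * (∑ k ∈ Finset.range (t + 1), β ^ (t - k + 1)) *
        ((2 * α * lam / (1 - lam) + α) * L) := by
  have hnoise (i : ι) : Integrable (fun ω => ‖∑ k ∈ Finset.range (t + 1),
      (β ^ (t - k) * (1 - β)) • (g k i ω - G i (x k i ω))‖) μ :=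
    (integrable_finsetSum _ fun k _ =>
      ((hgi k i).sub (integrable_condExp.congr (hunbiased k i))).smul _).norm
  have pathwise := integral_le_sum_integral_add_const (fun _ => Real.sqrt_nonneg _) hnoise fun ω =>
    sqrt_sum_norm_momentum_sub_le (x := (x · · ω)) (v := (v · · ω)) (g := (g · · ω)) hL hG hrow
      hcol hlam hlam1 hα hβ.1 (hx0 · ω) (hv0 · ω) (hv · · ω) (hx · · ω) (hs · · ω) t
  have noise := Finset.sum_le_card_nsmul Finset.univ _ _ fun i _ =>
    integral_norm_momentum_noise_le hp1 hp2 hσ hβ (hg · i) (hgi · i) (hunbiased · i) (hp · i)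
      (hmoment · i) t
  rw [Finset.card_univ, nsmul_eq_mul] at noise
  linarith

/-- (Stacked gradient estimation errors.)  Under Assumptions 2–4 and
GT-NSGDm, for every `t` the stacked gradient estimation error satisfies
`E[‖v^t - ∇F(x^t)‖] ≤ β^{t+1} ‖∇F(1ₙ ⊗ x̄⁰)‖
  + 2√2 (∑_{k=0}^t β^{(t-k)p} (1-β)^p)^{1/p} n σ
  + n ∑_{k=0}^t β^{t-k+1} (2αλ/(1-λ) + α) L`,
where `‖v^t - ∇F(x^t)‖ = (∑ i, ‖v_i^t - ∇f_i(x_i^t)‖²)^{1/2}` is the norm of the stacked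
vector in `ℝ^{nd}` and `∇F(1ₙ ⊗ x̄⁰) = [∇f_1(x̄⁰); …; ∇f_n(x̄⁰)]`.

The heavy-tailed noise Assumption 3 is formalized via a filtration `𝓕`: the iterates are
adapted, the stochastic gradients `g_i^t` are `𝓕 (t+1)`-measurable and integrable,
conditionally unbiased given `𝓕 t`, and have conditional `p`-th moment bounded by `σ^p`. -/
theorem stacked_gradient_estimation_error (d n : ℕ) (hn : 0 < n)
    (Ω : Type*) (mΩ : MeasurableSpace Ω) (μ : Measure Ω) (hμ : IsProbabilityMeasure μ)
    (f : Fin n → EuclideanSpace ℝ (Fin d) → ℝ)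
    (gradf : Fin n → EuclideanSpace ℝ (Fin d) → EuclideanSpace ℝ (Fin d))
    (hgrad : ∀ i z, HasGradientAt (f i) (gradf i z) z)
    (L : ℝ) (hL : 0 < L)
    (hsmooth : ∀ i z w, ‖gradf i z - gradf i w‖ ≤ L * ‖z - w‖)
    (p σ : ℝ) (hp1 : 1 < p) (hp2 : p ≤ 2) (hσ : 0 ≤ σ)
    (W : Matrix (Fin n) (Fin n) ℝ)
    (hWnonneg : ∀ i r, 0 ≤ W i r)
    (hWprim : ∃ k : ℕ, 0 < k ∧ ∀ i r, (0 : ℝ) < (W ^ k : Matrix (Fin n) (Fin n) ℝ) i r)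
    (hWrow : ∀ i, ∑ r, W i r = 1) (hWcol : ∀ r, ∑ i, W i r = 1)
    (lam : ℝ)
    (hlam : lam = ‖Matrix.toEuclideanCLM (𝕜 := ℝ) (n := Fin n)
      (W - (n : ℝ)⁻¹ • Matrix.of (fun _ _ => (1 : ℝ)))‖)
    (hlam1 : lam < 1)
    (𝓕 : Filtration ℕ mΩ)
    (α β : ℝ) (hα : 0 < α) (hβ : β ∈ Set.Ico (0 : ℝ) 1)
    (xbar0 : EuclideanSpace ℝ (Fin d))
    (x v y g : ℕ → Fin n → Ω → EuclideanSpace ℝ (Fin d))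
    (hx0 : ∀ i ω, x 0 i ω = xbar0)
    (hv0 : ∀ i ω, v 0 i ω = (1 - β) • g 0 i ω)
    (hvrec : ∀ t i ω, v (t + 1) i ω = β • v t i ω + (1 - β) • g (t + 1) i ω)
    (hy0 : ∀ i ω, y 0 i ω = ∑ r, W i r • v 0 r ω)
    (hyrec : ∀ t i ω, y (t + 1) i ω = ∑ r, W i r • (y t r ω + v (t + 1) r ω - v t r ω))
    (hxrec : ∀ t i ω, x (t + 1) i ω = ∑ r, W i r • (x t r ω - (α / ‖y t r ω‖) • y t r ω))
    (hadapt : ∀ i, Adapted 𝓕 fun t => x t i)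
    (hgmeas : ∀ t i, StronglyMeasurable[𝓕 (t + 1)] (g t i))
    (hgint : ∀ t i, Integrable (g t i) μ)
    (hunbiased : ∀ t i, μ[g t i|𝓕 t] =ᵐ[μ] fun ω => gradf i (x t i ω))
    (hmomint : ∀ t i, Integrable (fun ω => ‖g t i ω - gradf i (x t i ω)‖ ^ p) μ)
    (hmoment : ∀ t i, ∀ᵐ ω ∂μ,
      (μ[fun ω' => ‖g t i ω' - gradf i (x t i ω')‖ ^ p|𝓕 t]) ω ≤ σ ^ p) :
    ∀ t : ℕ,
      ∫ ω, Real.sqrt (∑ i, ‖v t i ω - gradf i (x t i ω)‖ ^ 2) ∂μ ≤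
        β ^ (t + 1) * Real.sqrt (∑ i, ‖gradf i xbar0‖ ^ 2) +
        2 * Real.sqrt 2 *
          (∑ k ∈ Finset.range (t + 1), (β ^ (t - k)) ^ p * (1 - β) ^ p) ^ (1 / p) *
          (n : ℝ) * σ +
        (n : ℝ) * (∑ k ∈ Finset.range (t + 1), β ^ (t - k + 1)) *
          ((2 * α * lam / (1 - lam) + α) * L) := by
  have hlam' : ‖Matrix.toEuclideanCLM (𝕜 := ℝ) (W - averagingMatrix (Fin n))‖ ≤ lam := by
    rw [hlam, averagingMatrix, Fintype.card_fin]
  intro t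
  simpa only [Fintype.card_fin] using stacked_gradient_estimation_error_general hL.le hsmooth
    hp1.le hp2 hσ hWrow hWcol hlam' hlam1 hα.le ⟨hβ.1, hβ.2.le⟩ hx0 hv0 hvrec hxrec
    (fun t i ω => norm_normalized_step_le hα.le (y t i ω))
    (fun t i => (hgmeas t i).aestronglyMeasurable) hgint hunbiased hmomint
    (fun t i => integral_le_of_condExp_le (𝓕.le t) (hmoment t i)) t
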